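/- Fix integers 1 ≤ k < N and δ₁, δ₂ ∈ (0,1) with δ₁ + δ₂ ≤ 1. Assume additionally that (F_n) is the natural filtration of (X_n). Let Ẑ := (1/k)·Σ_{m=1}^k X_m be the sample mean of the first k observations, set r₂ := 2·β·v^{1/p}·δ₂^{−1/p}·k^{−(p−1)/p}, λ := ( β·log(2/δ₁) / ( (N−k)·(β·𝔠_p + K_p·2^{p−1})·(v + r₂^p) ) )^{1/p}, and μ̂_N(k) := (1/(N−k))·Σ_{m=k+1}^N ( Trunc(λ(X_m − Ẑ))·(X_m − Ẑ) + Ẑ ). Then with probability at least 1 − δ₁ − δ₂: ‖μ̂_N(k) − μ‖ ≤ 2·( (β·𝔠_p + K_p·2^{p−1})·( v + 2^p·β^p·v/(δ₂·k^{p−1}) ) )^{1/p}·( β·log(2/δ₁)/(N−k) )^{(p−1)/p}. -/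

import Mathlib

open MeasureTheory
open scoped Classical

/-- `truncB x = min(1, ‖x‖)/‖x‖` for `x ≠ 0`, and `truncB 0 = 1`; so `truncB x • x` is the
projection of `x` onto the closed unit ball. -/
noncomputable def truncB {B : Type*} [NormedAddCommGroup B] (x : B) : ℝ :=
  if x = 0 then 1 else min 1 ‖x‖ / ‖x‖

/-- `K_p = (1/p) ((p-1)/p)^{p-1}`. -/
noncomputable def Kp (p : ℝ) : ℝ := (1 / p) * ((p - 1) / p) ^ (p - 1)

/-- `𝔠_p(ρ) = 2^{p+1} (e^{2ρ} - 2ρ - 1)/(2ρ)²`. -/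
noncomputable def frakC (p ρ : ℝ) : ℝ :=
  2 ^ (p + 1) * (Real.exp (2 * ρ) - 2 * ρ - 1) / (2 * ρ) ^ 2


lemma schwarz_nonneg {f : ℝ → ℝ} {a b : ℝ} (hab : a < b) (hf : ContinuousOn f (Set.Icc a b))
    (ha : 0 ≤ f a) (hb : 0 ≤ f b)
    (h : ∀ t ∈ Set.Ioo a b, ∀ η > 0, ∀ᶠ s in nhdsWithin (0:ℝ) (Set.Ioi 0),
      f (t + s) + f (t - s) - 2 * f t ≤ η * s ^ 2) :
    ∀ c ∈ Set.Icc a b, 0 ≤ f c := by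
  have key : ∀ η > 0, ∀ c ∈ Set.Icc a b, 0 ≤ f c + η * ((c - a) * (b - c)) := by
    intro η hη
    have hcont : ContinuousOn (fun c => f c + η * ((c - a) * (b - c))) (Set.Icc a b) := by
      apply hf.add; fun_prop
    obtain ⟨t, ht, hmin⟩ := isCompact_Icc.exists_isMinOn (Set.nonempty_Icc.2 hab.le) hcont
    intro c hc
    refine le_trans ?_ (hmin hc)
    by_contra hneg
    push Not at hneg
    have hta : t ≠ a := by rintro rfl; simp at hneg; linarith
    have htb : t ≠ b := by rintro rfl; simp at hneg; linarith
    have h1 : a < t := lt_of_le_of_ne ht.1 (Ne.symm hta)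
    have h2 : t < b := lt_of_le_of_ne ht.2 htb
    have e1 := h t ⟨h1, h2⟩ η hη
    have e2 : ∀ᶠ s in nhdsWithin (0:ℝ) (Set.Ioi 0), s ∈ Set.Ioo 0 (min (t - a) (b - t)) :=
      Ioo_mem_nhdsGT (lt_min (by linarith) (by linarith))
    obtain ⟨s, hs1, hs2⟩ := (e1.and e2).exists
    have hs3 := lt_min_iff.1 hs2.2
    have hs0 := hs2.1
    have m1 := hmin (show t + s ∈ Set.Icc a b from ⟨by linarith, by linarith⟩)
    have m2 := hmin (show t - s ∈ Set.Icc a b from ⟨by linarith, by linarith⟩)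
    simp only [Set.mem_ofPred_eq] at m1 m2
    nlinarith [mul_pos hη (pow_pos hs0 2)]
  intro c hc
  by_contra hneg
  push Not at hneg
  have hq : 0 ≤ (c - a) * (b - c) := mul_nonneg (by linarith [hc.1]) (by linarith [hc.2])
  have := key (-f c / (2 * ((c - a) * (b - c) + 1))) (by apply div_pos <;> linarith) c hc
  have h3 : -f c / (2 * ((c - a) * (b - c) + 1)) * ((c - a) * (b - c)) ≤ -f c / 2 := by
    rw [div_mul_eq_mul_div, div_le_div_iff₀ (by linarith) (by norm_num)]
    nlinarith
  linarith

lemma sinh_le_mul_cosh' {t : ℝ} (ht : 0 ≤ t) : Real.sinh t ≤ t * Real.cosh t := by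
  have hmono : MonotoneOn (fun t : ℝ => t * Real.cosh t - Real.sinh t) (Set.Ici 0) := by
    apply monotoneOn_of_deriv_nonneg (convex_Ici 0)
    · exact (by fun_prop : Continuous fun t : ℝ => t * Real.cosh t - Real.sinh t).continuousOn
    · exact (by fun_prop : Differentiable ℝ fun t : ℝ => t * Real.cosh t - Real.sinh t).differentiableOn
    · intro x hx
      simp at hx
      have hd : HasDerivAt (fun t : ℝ => t * Real.cosh t - Real.sinh t)
        (1 * Real.cosh x + x * Real.sinh x - Real.cosh x) x :=
        ((hasDerivAt_id x).mul (Real.hasDerivAt_cosh x)).sub (Real.hasDerivAt_sinh x)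
      rw [hd.deriv]
      have := Real.sinh_pos_iff.2 hx
      nlinarith [mul_pos hx this]
  have := hmono (Set.mem_Ici.2 le_rfl) (Set.mem_Ici.2 ht) ht
  simp at this
  linarith

lemma cosh_exp_anti : AntitoneOn (fun t : ℝ => Real.cosh t * Real.exp (-(t ^ 2 / 2))) (Set.Ici 0) := by
  have hdiff : ∀ x : ℝ, HasDerivAt (fun t : ℝ => Real.cosh t * Real.exp (-(t ^ 2 / 2)))
      (Real.sinh x * Real.exp (-(x ^ 2 / 2)) + Real.cosh x * (Real.exp (-(x ^ 2 / 2)) * (-x))) x := by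
    intro x
    refine (Real.hasDerivAt_cosh x).mul ?_
    apply HasDerivAt.exp
    have h2 : HasDerivAt (fun t : ℝ => t ^ 2 / 2) x x := by
      have := (hasDerivAt_pow 2 x).div_const 2
      simpa using this
    exact h2.neg
  apply antitoneOn_of_deriv_nonpos (convex_Ici 0)
  · exact fun x _ => (hdiff x).continuousAt.continuousWithinAt
  · exact fun x _ => (hdiff x).differentiableAt.differentiableWithinAt
  · intro x hx
    simp at hx
    rw [(hdiff x).deriv]
    nlinarith [sinh_le_mul_cosh' hx.le, Real.exp_pos (-(x ^ 2 / 2))]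

lemma cosh_pair {β m q x y : ℝ} (hβ : 1 ≤ β) (hm : 0 ≤ m) (hx : 0 ≤ x)
    (h1 : m ^ 2 + q ^ 2 ≤ x ^ 2 + β ^ 2 * y ^ 2) (h2 : q ^ 2 ≤ y ^ 2) :
    Real.cosh m * Real.cosh q ≤ Real.cosh x * Real.exp (β ^ 2 * y ^ 2 / 2) := by
  have hq := Real.cosh_le_exp_half_sq q
  rcases le_total x m with h | h
  · have := cosh_exp_anti (Set.mem_Ici.2 hx) (Set.mem_Ici.2 hm) h
    simp only at this
    have h3 : Real.cosh m ≤ Real.cosh x * Real.exp ((m ^ 2 - x ^ 2) / 2) := by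
      have e : Real.exp ((m ^ 2 - x ^ 2) / 2) = Real.exp (-(x ^ 2 / 2)) * Real.exp (m ^ 2 / 2) := by
        rw [← Real.exp_add]; congr 1; ring
      have e2 : Real.exp (-(m ^ 2 / 2)) * Real.exp (m ^ 2 / 2) = 1 := by
        rw [← Real.exp_add]; simp
      rw [e, ← mul_assoc]
      calc Real.cosh m = Real.cosh m * Real.exp (-(m ^ 2 / 2)) * Real.exp (m ^ 2 / 2) := by
            rw [mul_assoc, e2, mul_one]
        _ ≤ _ := mul_le_mul_of_nonneg_right this (Real.exp_pos _).le
    calc Real.cosh m * Real.cosh q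
        ≤ (Real.cosh x * Real.exp ((m ^ 2 - x ^ 2) / 2)) * Real.exp (q ^ 2 / 2) :=
          mul_le_mul h3 hq (Real.cosh_pos _).le (mul_pos (Real.cosh_pos _) (Real.exp_pos _)).le
      _ = Real.cosh x * Real.exp ((m ^ 2 - x ^ 2) / 2 + q ^ 2 / 2) := by
          rw [Real.exp_add]; ring
      _ ≤ _ := by
          apply mul_le_mul_of_nonneg_left _ (Real.cosh_pos _).le
          apply Real.exp_le_exp.2; linarith
  · apply mul_le_mul _ _ (Real.cosh_pos _).le (Real.cosh_pos _).le
    · exact Real.cosh_le_cosh.2 (by rwa [abs_of_nonneg hm, abs_of_nonneg hx])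
    · refine hq.trans (Real.exp_le_exp.2 ?_)
      nlinarith [sq_nonneg y, mul_nonneg (by nlinarith : (0:ℝ) ≤ β ^ 2 - 1) (sq_nonneg y)]

lemma one_add_sq_le_cosh (y : ℝ) : 1 + y ^ 2 / 2 ≤ Real.cosh y := by
  have h1 : Real.cosh y = 1 + 2 * Real.sinh (y / 2) ^ 2 := by
    have := Real.cosh_two_mul (y / 2)
    rw [show 2 * (y / 2) = y by ring, Real.cosh_sq] at this
    linarith
  have h2 : (y / 2) ^ 2 ≤ Real.sinh (y / 2) ^ 2 := by
    rw [sq_le_sq]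
    rcases le_total 0 (y / 2) with h | h
    · rw [abs_of_nonneg h, abs_of_nonneg (Real.sinh_nonneg_iff.2 h)]
      exact Real.self_le_sinh_iff.2 h
    · rw [abs_of_nonpos h, abs_of_nonpos (Real.sinh_nonpos_iff.2 h)]
      exact neg_le_neg (Real.sinh_le_self_iff.2 h)
  rw [h1]; nlinarith

lemma exp_neg_le_quad {u : ℝ} (hu : 0 ≤ u) : Real.exp (-u) ≤ 1 - u + u ^ 2 / 2 := by
  have h1 := Real.quadratic_le_exp_of_nonneg hu
  have h2 : 0 < 1 - u + u ^ 2 / 2 := by nlinarith [sq_nonneg (u - 1)]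
  have h3 : Real.exp (-u) * Real.exp u = 1 := by rw [← Real.exp_add]; simp
  have h4 : 1 ≤ (1 - u + u ^ 2 / 2) * (1 + u + u ^ 2 / 2) := by nlinarith [sq_nonneg (u ^ 2)]
  have h5 : Real.exp (-u) * (1 + u + u ^ 2 / 2) ≤ 1 := by
    exact (mul_le_mul_of_nonneg_left h1 (Real.exp_pos _).le).trans_eq h3
  have h6 : 0 < 1 + u + u ^ 2 / 2 := by positivity
  exact le_of_mul_le_mul_right (h5.trans h4) h6

lemma G_diff_bound {K D ε : ℝ} (hε : 0 < ε) (hD0 : 0 ≤ D) (hK : 0 ≤ K) :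
    K * Real.exp (D * (1 + 2 * ε)) - K * Real.exp (D * (0 + 2 * ε)) -
      (K * Real.exp (D * (0 + 2 * ε)) - K * Real.exp (D * (-ε + 2 * ε))) / ε ≤
    K * Real.exp (2 * ε * D) * (Real.exp D - 1 - D + D ^ 2 * ε / 2) := by
  rw [show D * (1 + 2 * ε) = 2 * ε * D + D by ring, show D * (0 + 2 * ε) = 2 * ε * D by ring,
        show D * (-ε + 2 * ε) = 2 * ε * D + -(D * ε) by ring, Real.exp_add, Real.exp_add]
  have q := exp_neg_le_quad (mul_nonneg hD0 hε.le)
  have : D - D ^ 2 * ε / 2 ≤ (1 - Real.exp (-(D * ε))) / ε := by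
    rw [le_div_iff₀ hε]; nlinarith
  have e : K * (Real.exp (2 * ε * D) * Real.exp D) - K * Real.exp (2 * ε * D) -
      (K * Real.exp (2 * ε * D) - K * (Real.exp (2 * ε * D) * Real.exp (-(D * ε)))) / ε =
      K * Real.exp (2 * ε * D) * (Real.exp D - 1 - (1 - Real.exp (-(D * ε))) / ε) := by
    ring
  rw [e]
  apply mul_le_mul_of_nonneg_left (by linarith)
  have := Real.exp_pos (2 * ε * D); positivity

section
variable {B : Type*} [NormedAddCommGroup B] [NormedSpace ℝ B]

lemma cosh_norm_pair {β : ℝ} (hβ : 1 ≤ β)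
    (hsmooth : ∀ x y : B, ‖x + y‖ ^ 2 + ‖x - y‖ ^ 2 ≤ 2 * ‖x‖ ^ 2 + 2 * β ^ 2 * ‖y‖ ^ 2)
    (x y : B) : Real.cosh ‖x + y‖ + Real.cosh ‖x - y‖ ≤
      2 * Real.cosh ‖x‖ * Real.exp (β ^ 2 * ‖y‖ ^ 2 / 2) := by
  have h := hsmooth x y
  have h2 : |‖x + y‖ - ‖x - y‖| ≤ 2 * ‖y‖ := by
    refine (abs_norm_sub_norm_le _ _).trans ?_
    have : x + y - (x - y) = (2:ℝ) • y := by rw [two_smul]; abel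
    rw [this, norm_smul]; simp
  have h3 := cosh_pair (m := (‖x + y‖ + ‖x - y‖) / 2) (q := (‖x + y‖ - ‖x - y‖) / 2) (x := ‖x‖)
    (y := ‖y‖) hβ (by positivity) (norm_nonneg _) (by nlinarith)
    (by have := sq_le_sq' (by linarith [(abs_le.1 h2).1]) (abs_le.1 h2).2; nlinarith)
  have e1 : Real.cosh ‖x + y‖ = Real.cosh ((‖x + y‖ + ‖x - y‖) / 2 + (‖x + y‖ - ‖x - y‖) / 2) := by
    congr 1; ring
  have e2 : Real.cosh ‖x - y‖ = Real.cosh ((‖x + y‖ + ‖x - y‖) / 2 - (‖x + y‖ - ‖x - y‖) / 2) := by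
    congr 1; ring
  rw [Real.cosh_add] at e1
  rw [Real.cosh_sub] at e2
  linarith

set_option maxHeartbeats 800000 in
lemma cosh_step {β : ℝ} (hβ : 1 ≤ β)
    (hsmooth : ∀ x y : B, ‖x + y‖ ^ 2 + ‖x - y‖ ^ 2 ≤ 2 * ‖x‖ ^ 2 + 2 * β ^ 2 * ‖y‖ ^ 2)
    (x d : B) {ε : ℝ} (hε : 0 < ε) :
    Real.cosh ‖x + d‖ ≤ Real.cosh ‖x‖ + (Real.cosh ‖x‖ - Real.cosh ‖x - ε • d‖) / ε
      + β ^ 2 * Real.cosh ‖x‖ * Real.exp (2 * ε * ‖d‖) *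
        (Real.exp ‖d‖ - 1 - ‖d‖ + ‖d‖ ^ 2 * ε / 2) := by
  set D := ‖d‖ with hD
  have hD0 : 0 ≤ D := norm_nonneg _
  set h : ℝ → ℝ := fun t => Real.cosh ‖x + t • d‖ with hh
  set G : ℝ → ℝ := fun t => β ^ 2 * Real.cosh ‖x‖ * Real.exp (D * (t + 2 * ε)) with hG
  have hcont : Continuous h := by fun_prop
  have hGcont : Continuous G := by fun_prop
  have hGpos : ∀ t, 0 < G t := fun t => by
    have := Real.cosh_pos ‖x‖
    positivity
  have hhG : ∀ t, -ε ≤ t → h t * β ^ 2 ≤ G t := by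
    intro t ht
    have : h t ≤ Real.cosh ‖x‖ * Real.exp (D * (t + 2 * ε)) := by
      have n1 : ‖x + t • d‖ ≤ ‖x‖ + D * (t + 2 * ε) := by
        refine (norm_add_le _ _).trans ?_
        rw [norm_smul, Real.norm_eq_abs]
        have : |t| ≤ t + 2 * ε := by rw [abs_le]; constructor <;> linarith
        nlinarith
      have n2 : 0 ≤ D * (t + 2 * ε) := mul_nonneg hD0 (by linarith)
      have n3 : h t ≤ Real.cosh (‖x‖ + D * (t + 2 * ε)) := by
        apply Real.cosh_le_cosh.2
        rw [abs_of_nonneg (norm_nonneg _), abs_of_nonneg (by positivity)]; exact n1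
      refine n3.trans ?_
      rw [Real.cosh_add, ← Real.cosh_add_sinh (D * (t + 2 * ε)), mul_add (Real.cosh ‖x‖)]
      have s1 := (Real.sinh_lt_cosh ‖x‖).le
      have s2 := Real.sinh_nonneg_iff.2 n2
      have s3 := mul_le_mul_of_nonneg_right s1 s2
      linarith
    have b2 : 0 ≤ β ^ 2 := by positivity
    simp only [hG]; nlinarith
  -- the line
  set f : ℝ → ℝ := fun t => (h t - G t) - ((h (-ε) - G (-ε)) +
    ((h 1 - G 1) - (h (-ε) - G (-ε))) / (1 + ε) * (t + ε)) with hf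
  have hfc : Continuous f := by fun_prop
  have hpos := schwarz_nonneg (f := f) (a := -ε) (b := 1) (by linarith) hfc.continuousOn
    (by simp [hf]) (by
      have : (1 + ε) ≠ 0 := by positivity
      simp only [hf]; rw [div_mul_cancel₀ _ this]; simp) (by
    intro t ht η hη
    have hC : 0 ≤ G t * (β ^ 2 * D ^ 4 / 2) := by have := hGpos t; positivity
    have lim1 : ∀ᶠ s in nhdsWithin (0:ℝ) (Set.Ioi 0), β ^ 2 * (s ^ 2 * D ^ 2) / 2 < 1 := by
      have : Filter.Tendsto (fun s : ℝ => β ^ 2 * (s ^ 2 * D ^ 2) / 2) (nhdsWithin 0 (Set.Ioi 0)) (nhds 0) := by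
        have : Continuous (fun s : ℝ => β ^ 2 * (s ^ 2 * D ^ 2) / 2) := by fun_prop
        simpa using (this.tendsto 0).mono_left nhdsWithin_le_nhds
      exact this.eventually (gt_mem_nhds one_pos)
    have lim2 : ∀ᶠ s in nhdsWithin (0:ℝ) (Set.Ioi 0), G t * (β ^ 2 * D ^ 4 / 2) * s ^ 2 < η := by
      have : Filter.Tendsto (fun s : ℝ => G t * (β ^ 2 * D ^ 4 / 2) * s ^ 2) (nhdsWithin 0 (Set.Ioi 0)) (nhds 0) := by
        have : Continuous (fun s : ℝ => G t * (β ^ 2 * D ^ 4 / 2) * s ^ 2) := by fun_prop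
        simpa using (this.tendsto 0).mono_left nhdsWithin_le_nhds
      exact this.eventually (gt_mem_nhds hη)
    filter_upwards [lim1, lim2] with s hs1 hs2
    have c1 := cosh_norm_pair hβ hsmooth (x + t • d) (s • d)
    have c2 : h (t + s) + h (t - s) ≤ 2 * h t * Real.exp (β ^ 2 * (s ^ 2 * D ^ 2) / 2) := by
      simp only [hh]
      convert c1 using 3
      · rw [add_smul]; abel_nf
      · rw [sub_smul]; congr 2; abel
      · rw [norm_smul, mul_pow, Real.norm_eq_abs, sq_abs]
    have c3 : G (t + s) + G (t - s) = 2 * G t * Real.cosh (D * s) := by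
      simp only [hG]
      rw [Real.cosh_eq (D * s), show D * (t + s + 2 * ε) = D * (t + 2 * ε) + D * s by ring,
        show D * (t - s + 2 * ε) = D * (t + 2 * ε) + -(D * s) by ring, Real.exp_add, Real.exp_add]
      ring
    have c4 : 1 + (D * s) ^ 2 / 2 ≤ Real.cosh (D * s) := by
      exact one_add_sq_le_cosh _
    set u := β ^ 2 * (s ^ 2 * D ^ 2) / 2 with hu
    have hu0 : 0 ≤ u := by positivity
    have c5 : Real.exp u ≤ 1 + u + u ^ 2 := by
      have := Real.abs_exp_sub_one_sub_id_le (x := u) (by rw [abs_of_nonneg hu0]; exact hs1.le)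
      linarith [(abs_le.1 this).2]
    have c6 := hhG t ht.1.le
    have hh0 : 0 < h t := Real.cosh_pos _
    have c7 : h t * (u + u ^ 2) ≤ G t * ((s ^ 2 * D ^ 2) / 2 + β ^ 2 * (s ^ 2 * D ^ 2) ^ 2 / 4) := by
      have : h t * (u + u ^ 2) = (h t * β ^ 2) * ((s ^ 2 * D ^ 2) / 2 + β ^ 2 * (s ^ 2 * D ^ 2) ^ 2 / 4) := by
        rw [hu]; ring
      rw [this]
      exact mul_le_mul_of_nonneg_right c6 (by positivity)
    have c8 : f (t + s) + f (t - s) - 2 * f t =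
        (h (t + s) + h (t - s) - 2 * h t) - (G (t + s) + G (t - s) - 2 * G t) := by
      simp only [hf]; ring
    rw [c8]
    have c9 : h (t + s) + h (t - s) - 2 * h t ≤ 2 * (h t * (u + u ^ 2)) := by
      nlinarith [mul_le_mul_of_nonneg_left c5 hh0.le]
    have c10 : G t * (D * s) ^ 2 ≤ G (t + s) + G (t - s) - 2 * G t := by
      nlinarith [mul_le_mul_of_nonneg_left c4 (hGpos t).le]
    have c11 : G t * (β ^ 2 * D ^ 4 / 2) * s ^ 2 * s ^ 2 ≤ η * s ^ 2 :=
      mul_le_mul_of_nonneg_right hs2.le (by positivity)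
    nlinarith) 0 ⟨by linarith, by norm_num⟩
  have h0 : h 0 = Real.cosh ‖x‖ := by simp [hh]
  have h1 : h 1 = Real.cosh ‖x + d‖ := by simp [hh]
  have h2 : h (-ε) = Real.cosh ‖x - ε • d‖ := by simp [hh, sub_eq_add_neg]
  rw [← h0, ← h1, ← h2]
  simp only [hf] at hpos
  have hA : h 1 - h 0 ≤ (h 0 - h (-ε)) / ε + (G 1 - G 0 - (G 0 - G (-ε)) / ε) := by
    have h1e : 0 < 1 + ε := by positivity
    have : 0 ≤ ((h 0 - G 0) - ((h (-ε) - G (-ε)) +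
      ((h 1 - G 1) - (h (-ε) - G (-ε))) / (1 + ε) * (0 + ε))) * ((1 + ε) / ε) :=
      mul_nonneg hpos (by positivity)
    have e : ((h 0 - G 0) - ((h (-ε) - G (-ε)) +
      ((h 1 - G 1) - (h (-ε) - G (-ε))) / (1 + ε) * (0 + ε))) * ((1 + ε) / ε)
      = (h 0 - h (-ε)) / ε + (G 1 - G 0 - (G 0 - G (-ε)) / ε) - (h 1 - h 0) := by
      field_simp; ring
    linarith
  have hB : G 1 - G 0 - (G 0 - G (-ε)) / ε ≤ β ^ 2 * h 0 * Real.exp (2 * ε * D) *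
        (Real.exp D - 1 - D + D ^ 2 * ε / 2) := by
    rw [h0]
    exact G_diff_bound hε hD0 (by have := Real.cosh_pos ‖x‖; positivity)
  linarith
end

lemma add_rpow_le_two {p a b : ℝ} (hp : 1 ≤ p) (ha : 0 ≤ a) (hb : 0 ≤ b) :
    (a + b) ^ p ≤ 2 ^ (p - 1) * (a ^ p + b ^ p) := by
  lift a to NNReal using ha
  lift b to NNReal using hb
  exact_mod_cast NNReal.rpow_add_le_mul_rpow_add_rpow a b hp

lemma exp_quot_mono {u M : ℝ} (hu : 0 ≤ u) (huM : u ≤ M) (hM : 0 < M) :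
    Real.exp u - 1 - u ≤ (Real.exp M - 1 - M) / M ^ 2 * u ^ 2 := by
  have hs : ∀ x : ℝ, HasSum (fun n : ℕ => x ^ (n + 2) / ((n + 2).factorial : ℝ)) (Real.exp x - 1 - x) := by
    intro x
    have h := NormedSpace.expSeries_div_hasSum_exp x
    rw [← Real.exp_eq_exp_ℝ] at h
    have := (hasSum_nat_add_iff' 2).2 h
    simp [Finset.sum_range_succ] at this
    rwa [sub_sub]
  refine hasSum_le ?_ (hs u) (((hs M).div_const (M ^ 2)).mul_right (u ^ 2))
  intro n
  have : u ^ n ≤ M ^ n := pow_le_pow_left₀ hu huM n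
  have e : M ^ (n + 2) / ((n + 2).factorial : ℝ) / M ^ 2 * u ^ 2 = M ^ n * u ^ 2 / ((n + 2).factorial : ℝ) := by
    field_simp; ring
  rw [e, pow_add]
  gcongr

section
variable {B : Type*} [NormedAddCommGroup B] [NormedSpace ℝ B]

lemma convexOn_comp_norm {g : ℝ → ℝ} (hg : ConvexOn ℝ (Set.Ici 0) g)
    (hmono : MonotoneOn g (Set.Ici 0)) : ConvexOn ℝ Set.univ (fun x : B => g ‖x‖) := by
  refine ⟨convex_univ, ?_⟩
  intro x _ y _ a b ha hb hab
  refine le_trans (hmono (norm_nonneg _) ?_ ?_) (hg.2 (norm_nonneg x) (norm_nonneg y) ha hb hab)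
  · simp only [smul_eq_mul, Set.mem_Ici]; positivity
  · refine (norm_add_le _ _).trans ?_
    simp [norm_smul, abs_of_nonneg ha, abs_of_nonneg hb]

lemma convexOn_norm_rpow' {p : ℝ} (hp : 1 ≤ p) : ConvexOn ℝ Set.univ (fun x : B => ‖x‖ ^ p) :=
  convexOn_comp_norm (convexOn_rpow hp)
    (fun _ hx _ _ hxy => Real.rpow_le_rpow hx hxy (by linarith))

lemma convexOn_cosh_norm : ConvexOn ℝ Set.univ (fun x : B => Real.cosh ‖x‖) := by
  apply convexOn_comp_norm
  · refine ⟨convex_Ici 0, ?_⟩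
    intro x _ y _ a b ha hb hab
    have h1 := convexOn_exp.2 (Set.mem_univ x) (Set.mem_univ y) ha hb hab
    have h2 := convexOn_exp.2 (Set.mem_univ (-x)) (Set.mem_univ (-y)) ha hb hab
    simp only [smul_eq_mul, Real.cosh_eq] at *
    rw [show -(a * x + b * y) = a * -x + b * -y by ring]
    linarith
  · intro x hx y hy hxy
    exact Real.cosh_le_cosh.2 (by rwa [abs_of_nonneg hx, abs_of_nonneg hy])

lemma psmooth {β p : ℝ} (hβ : 1 ≤ β) (hp1 : 1 < p) (hp2 : p ≤ 2)
    (hsmooth : ∀ x y : B, ‖x + y‖ ^ 2 + ‖x - y‖ ^ 2 ≤ 2 * ‖x‖ ^ 2 + 2 * β ^ 2 * ‖y‖ ^ 2) (x y : B) :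
    ‖x + y‖ ^ p + ‖x - y‖ ^ p ≤ 2 * ‖x‖ ^ p + 2 * β ^ p * ‖y‖ ^ p := by
  have hq : ∀ a : ℝ, 0 ≤ a → a ^ p = (a ^ 2) ^ (p / 2) := by
    intro a ha
    rw [← Real.rpow_natCast, ← Real.rpow_mul ha]; congr 1; push_cast; ring
  have hβ0 : 0 ≤ β := by linarith
  have h1 := (Real.concaveOn_rpow (p := p / 2) (by linarith) (by linarith)).2
    (Set.mem_Ici.2 (sq_nonneg ‖x + y‖)) (Set.mem_Ici.2 (sq_nonneg ‖x - y‖))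
    (show (0:ℝ) ≤ 1 / 2 by norm_num) (show (0:ℝ) ≤ 1 / 2 by norm_num) (by norm_num)
  simp only [smul_eq_mul] at h1
  have h2 : (1 / 2 * ‖x + y‖ ^ 2 + 1 / 2 * ‖x - y‖ ^ 2) ^ (p / 2) ≤
      (‖x‖ ^ 2 + (β * ‖y‖) ^ 2) ^ (p / 2) := by
    apply Real.rpow_le_rpow (by positivity) _ (by linarith)
    nlinarith [hsmooth x y]
  have h3 := Real.rpow_add_le_add_rpow (sq_nonneg ‖x‖) (sq_nonneg (β * ‖y‖))
    (show 0 ≤ p / 2 by linarith) (by linarith)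
  rw [← hq _ (norm_nonneg _), ← hq _ (norm_nonneg _)] at h1
  rw [← hq _ (norm_nonneg _), ← hq _ (by positivity), Real.mul_rpow hβ0 (norm_nonneg _)] at h3
  linarith

variable [CompleteSpace B] {Ω : Type*} {m mΩ : MeasurableSpace Ω} {P : Measure Ω} [IsProbabilityMeasure P]

lemma jensen_int (hm : m ≤ mΩ) {φ : B → ℝ} (hφ : ConvexOn ℝ Set.univ φ) (hφc : Continuous φ)
    {S d : Ω → B} (hS : StronglyMeasurable[m] S) (hSi : Integrable S P) (hd : Integrable d P)
    (hd0 : P[d | m] =ᵐ[P] 0) (h1 : Integrable (fun ω => φ (S ω - d ω)) P)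
    (h2 : Integrable (fun ω => φ (S ω)) P) :
    ∫ ω, φ (S ω) ∂P ≤ ∫ ω, φ (S ω - d ω) ∂P := by
  have hJ := ConvexOn.map_condExp_le_univ (μ := P) hm hφ hφc.lowerSemicontinuous (hSi.sub hd)
    (by exact h1)
  have e := condExp_sub hSi hd m
  rw [condExp_of_stronglyMeasurable hm hS hSi] at e
  have : ∫ ω, φ (S ω) ∂P ≤ ∫ ω, (P[φ ∘ (S - d) | m]) ω ∂P := by
    apply integral_mono_ae h2 integrable_condExp
    filter_upwards [hJ, e, hd0] with ω h1 h2 h3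
    simp only [Function.comp_apply] at h1
    rw [h2] at h1
    simpa [h3] using h1
  rw [integral_condExp hm] at this
  exact this

lemma pinelis_step (hm : m ≤ mΩ) {β M s R : ℝ} (hβ : 1 ≤ β) (hM : 0 < M)
    (hsmooth : ∀ x y : B, ‖x + y‖ ^ 2 + ‖x - y‖ ^ 2 ≤ 2 * ‖x‖ ^ 2 + 2 * β ^ 2 * ‖y‖ ^ 2)
    {S d : Ω → B} (hS : StronglyMeasurable[m] S) (hSb : ∀ᵐ ω ∂P, ‖S ω‖ ≤ R)
    (hd : AEStronglyMeasurable d P) (hdb : ∀ᵐ ω ∂P, ‖d ω‖ ≤ M)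
    (hd0 : P[d | m] =ᵐ[P] 0) (hd2 : ∀ᵐ ω ∂P, (P[fun ω' => ‖d ω'‖ ^ 2 | m]) ω ≤ s) :
    ∫ ω, Real.cosh ‖S ω + d ω‖ ∂P ≤
      (1 + β ^ 2 * ((Real.exp M - 1 - M) / M ^ 2) * s) * ∫ ω, Real.cosh ‖S ω‖ ∂P := by
  have hSm : AEStronglyMeasurable S P := (hS.mono hm).aestronglyMeasurable
  have hSi : Integrable S P := Integrable.of_bound hSm R hSb
  have hdi : Integrable d P := Integrable.of_bound hd M hdb
  have hci : ∀ (Y : Ω → B) (C : ℝ), AEStronglyMeasurable Y P → (∀ᵐ ω ∂P, ‖Y ω‖ ≤ C) →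
      Integrable (fun ω => Real.cosh ‖Y ω‖) P := by
    intro Y C hY hYC
    refine Integrable.of_bound (Real.continuous_cosh.comp_aestronglyMeasurable hY.norm) (Real.cosh C) ?_
    filter_upwards [hYC] with ω h
    rw [Real.norm_eq_abs, abs_of_pos (Real.cosh_pos _)]
    apply Real.cosh_le_cosh.2
    rw [abs_of_nonneg (norm_nonneg _)]; exact h.trans (le_abs_self _)
  have i0 := hci S R hSm hSb
  have i1 := hci (fun ω => S ω + d ω) (R + M) (hSm.add hd) (by
    filter_upwards [hSb, hdb] with ω h1 h2 using (norm_add_le _ _).trans (add_le_add h1 h2))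
  have i2 : Integrable (fun ω => Real.cosh ‖S ω‖ * ‖d ω‖ ^ 2) P := by
    refine Integrable.of_bound (i0.1.mul (hd.norm.pow 2)) (Real.cosh R * M ^ 2) ?_
    filter_upwards [hSb, hdb] with ω h1 h2
    rw [Real.norm_eq_abs, abs_of_nonneg (mul_nonneg (Real.cosh_pos _).le (by positivity))]
    apply mul_le_mul _ (pow_le_pow_left₀ (norm_nonneg _) h2 2) (by positivity) (Real.cosh_pos _).le
    apply Real.cosh_le_cosh.2
    rw [abs_of_nonneg (norm_nonneg _)]; exact h1.trans (le_abs_self _)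
  have hd2i : Integrable (fun ω => ‖d ω‖ ^ 2) P := by
    refine Integrable.of_bound (hd.norm.pow 2) (M ^ 2) ?_
    filter_upwards [hdb] with ω h2
    rw [Real.norm_eq_abs, abs_of_nonneg (by positivity)]
    exact pow_le_pow_left₀ (norm_nonneg _) h2 2
  have hvar : ∫ ω, Real.cosh ‖S ω‖ * ‖d ω‖ ^ 2 ∂P ≤ s * ∫ ω, Real.cosh ‖S ω‖ ∂P := by
    have hc : StronglyMeasurable[m] (fun ω => Real.cosh ‖S ω‖) :=
      Real.continuous_cosh.comp_stronglyMeasurable hS.norm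
    have := condExp_mul_of_stronglyMeasurable_left (μ := P) hc (g := fun ω => ‖d ω‖ ^ 2) i2 hd2i
    rw [← integral_condExp hm, ← integral_const_mul]
    apply integral_mono_ae integrable_condExp (i0.const_mul s)
    filter_upwards [this, hd2] with ω h1 h2
    have e : (P[fun ω => Real.cosh ‖S ω‖ * ‖d ω‖ ^ 2 | m]) ω =
      Real.cosh ‖S ω‖ * (P[fun ω' => ‖d ω'‖ ^ 2 | m]) ω := h1
    rw [e, mul_comm s]
    exact mul_le_mul_of_nonneg_left h2 (Real.cosh_pos _).le
  set K := (Real.exp M - 1 - M) / M ^ 2 with hK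
  have hK0 : 0 ≤ K := div_nonneg (by linarith [Real.add_one_le_exp M]) (by positivity)
  set I := ∫ ω, Real.cosh ‖S ω‖ ∂P with hI
  -- the bound for each positive ε
  have key : ∀ ε : ℝ, 0 < ε → ∫ ω, Real.cosh ‖S ω + d ω‖ ∂P ≤
      I + β ^ 2 * Real.exp (2 * ε * M) * (K + ε / 2) * (s * I) := by
    intro ε hε
    have i3 := hci (fun ω => S ω - ε • d ω) (R + ε * M) (hSm.sub (hd.const_smul ε)) (by
      filter_upwards [hSb, hdb] with ω h1 h2
      refine (norm_sub_le _ _).trans (add_le_add h1 ?_)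
      rw [norm_smul, Real.norm_eq_abs, abs_of_pos hε]
      exact mul_le_mul_of_nonneg_left h2 hε.le)
    have hJ := jensen_int (P := P) hm (convexOn_cosh_norm (B := B)) (by fun_prop) hS hSi
      (hdi.smul ε) (by
        filter_upwards [condExp_smul (μ := P) ε d m, hd0] with ω h1 h2
        rw [h1]; simp [h2]) i3 i0
    simp only [Pi.smul_apply] at hJ
    have hpt : ∀ᵐ ω ∂P, Real.cosh ‖S ω + d ω‖ ≤ Real.cosh ‖S ω‖ +
        ε⁻¹ * (Real.cosh ‖S ω‖ - Real.cosh ‖S ω - ε • d ω‖) +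
        β ^ 2 * Real.exp (2 * ε * M) * (K + ε / 2) * (Real.cosh ‖S ω‖ * ‖d ω‖ ^ 2) := by
      filter_upwards [hdb] with ω h2
      refine (cosh_step hβ hsmooth (S ω) (d ω) hε).trans ?_
      rw [div_eq_inv_mul]
      have a1 := exp_quot_mono (norm_nonneg (d ω)) h2 hM
      have a2 : Real.exp (2 * ε * ‖d ω‖) ≤ Real.exp (2 * ε * M) := by
        apply Real.exp_le_exp.2; gcongr
      have a3 : Real.exp ‖d ω‖ - 1 - ‖d ω‖ + ‖d ω‖ ^ 2 * ε / 2 ≤ (K + ε / 2) * ‖d ω‖ ^ 2 := by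
        rw [hK]; linarith
      have a4 := Real.cosh_pos ‖S ω‖
      have : β ^ 2 * Real.cosh ‖S ω‖ * Real.exp (2 * ε * ‖d ω‖) *
        (Real.exp ‖d ω‖ - 1 - ‖d ω‖ + ‖d ω‖ ^ 2 * ε / 2) ≤
        β ^ 2 * Real.cosh ‖S ω‖ * Real.exp (2 * ε * M) * ((K + ε / 2) * ‖d ω‖ ^ 2) := by
        apply mul_le_mul
        · gcongr
        · exact a3
        · have := Real.add_one_le_exp ‖d ω‖
          have : 0 ≤ ‖d ω‖ ^ 2 * ε / 2 := by positivity
          linarith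
        · positivity
      linarith
    have := integral_mono_ae i1 (((i0.add ((i0.sub i3).const_mul ε⁻¹))).add (i2.const_mul _)) hpt
    refine this.trans ?_
    rw [integral_add' (i0.add ((i0.sub i3).const_mul ε⁻¹)) (i2.const_mul _),
      integral_add' i0 ((i0.sub i3).const_mul ε⁻¹), integral_const_mul, integral_const_mul]
    simp only [Pi.sub_apply]
    rw [integral_sub i0 i3]
    have b1 : ε⁻¹ * (∫ ω, Real.cosh ‖S ω‖ ∂P - ∫ ω, Real.cosh ‖S ω - ε • d ω‖ ∂P) ≤ 0 :=
      mul_nonpos_of_nonneg_of_nonpos (by positivity) (by linarith)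
    have b2 := mul_le_mul_of_nonneg_left hvar
      (show 0 ≤ β ^ 2 * Real.exp (2 * ε * M) * (K + ε / 2) by positivity)
    linarith
  have hlim : Filter.Tendsto (fun ε : ℝ => I + β ^ 2 * Real.exp (2 * ε * M) * (K + ε / 2) * (s * I))
      (nhdsWithin 0 (Set.Ioi 0)) (nhds (I + β ^ 2 * K * (s * I))) := by
    have : Continuous (fun ε : ℝ => I + β ^ 2 * Real.exp (2 * ε * M) * (K + ε / 2) * (s * I)) := by
      fun_prop
    simpa using (this.tendsto 0).mono_left nhdsWithin_le_nhds
  have := ge_of_tendsto hlim (eventually_nhdsWithin_of_forall fun ε hε => key ε hε)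
  refine this.trans (le_of_eq (by ring))

lemma pinelis_iter {𝒢 : ℕ → MeasurableSpace Ω} (hle : ∀ i, 𝒢 i ≤ mΩ) (hmono : Monotone 𝒢)
    {β M s : ℝ} (hβ : 1 ≤ β) (hM : 0 < M) (hs : 0 ≤ s)
    (hsmooth : ∀ x y : B, ‖x + y‖ ^ 2 + ‖x - y‖ ^ 2 ≤ 2 * ‖x‖ ^ 2 + 2 * β ^ 2 * ‖y‖ ^ 2)
    {d : ℕ → Ω → B} (hd : ∀ i, StronglyMeasurable[𝒢 (i + 1)] (d i))
    (hdb : ∀ i, ∀ᵐ ω ∂P, ‖d i ω‖ ≤ M)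
    (hd0 : ∀ i, P[d i | 𝒢 i] =ᵐ[P] 0) (hd2 : ∀ i, ∀ᵐ ω ∂P, (P[fun ω' => ‖d i ω'‖ ^ 2 | 𝒢 i]) ω ≤ s)
    (n : ℕ) :
    ∫ ω, Real.cosh ‖∑ i ∈ Finset.range n, d i ω‖ ∂P ≤
      (1 + β ^ 2 * ((Real.exp M - 1 - M) / M ^ 2) * s) ^ n := by
  have hK0 : 0 ≤ (Real.exp M - 1 - M) / M ^ 2 :=
    div_nonneg (by linarith [Real.add_one_le_exp M]) (by positivity)
  induction n with
  | zero => simp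
  | succ n ih =>
    have hSm : StronglyMeasurable[𝒢 n] (fun ω => ∑ i ∈ Finset.range n, d i ω) := by
      apply Finset.stronglyMeasurable_fun_sum
      intro i hi
      exact (hd i).mono (hmono (Finset.mem_range.1 hi))
    have hSb : ∀ᵐ ω ∂P, ‖∑ i ∈ Finset.range n, d i ω‖ ≤ n * M := by
      filter_upwards [ae_all_iff.2 hdb] with ω h
      refine (norm_sum_le _ _).trans ?_
      refine (Finset.sum_le_sum fun i _ => h i).trans ?_
      simp
    simp only [Finset.sum_range_succ]
    refine (pinelis_step (hle n) hβ hM hsmooth hSm hSb ((hd n).mono (hle _)).aestronglyMeasurable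
      (hdb n) (hd0 n) (hd2 n)).trans ?_
    rw [pow_succ' _ n]
    exact mul_le_mul_of_nonneg_left ih (by positivity)

lemma pmoment_step (hm : m ≤ mΩ) {β p : ℝ} (hβ : 1 ≤ β) (hp1 : 1 < p) (hp2 : p ≤ 2)
    (hsmooth : ∀ x y : B, ‖x + y‖ ^ 2 + ‖x - y‖ ^ 2 ≤ 2 * ‖x‖ ^ 2 + 2 * β ^ 2 * ‖y‖ ^ 2)
    {S d : Ω → B} (hS : StronglyMeasurable[m] S) (hSp : MemLp S (ENNReal.ofReal p) P)
    (hd : MemLp d (ENNReal.ofReal p) P) (hd0 : P[d | m] =ᵐ[P] 0) :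
    ∫ ω, ‖S ω + d ω‖ ^ p ∂P ≤ ∫ ω, ‖S ω‖ ^ p ∂P + 2 * β ^ p * ∫ ω, ‖d ω‖ ^ p ∂P := by
  have h0 : ENNReal.ofReal p ≠ 0 := by simp; linarith
  have h1p : 1 ≤ ENNReal.ofReal p := by rw [ENNReal.one_le_ofReal]; exact hp1.le
  have tr : (ENNReal.ofReal p).toReal = p := ENNReal.toReal_ofReal (by linarith)
  have hi : ∀ {Y : Ω → B}, MemLp Y (ENNReal.ofReal p) P → Integrable (fun ω => ‖Y ω‖ ^ p) P := by
    intro Y hY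
    have := hY.integrable_norm_rpow h0 ENNReal.ofReal_ne_top
    rwa [tr] at this
  have i1 := hi hSp
  have i2 := hi hd
  have i3 : Integrable (fun ω => ‖S ω + d ω‖ ^ p) P := hi (hSp.add hd)
  have i4 : Integrable (fun ω => ‖S ω - d ω‖ ^ p) P := hi (hSp.sub hd)
  have hJ := jensen_int (P := P) hm (convexOn_norm_rpow' (B := B) hp1.le)
    (continuous_norm.rpow_const (fun x => Or.inr (by linarith))) hS (hSp.integrable h1p) (hd.integrable h1p) hd0 i4 i1
  have := integral_mono (i3.add i4) ((i1.const_mul 2).add (i2.const_mul (2 * β ^ p)))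
    (fun ω => psmooth hβ hp1 hp2 hsmooth (S ω) (d ω))
  simp only [Pi.add_apply] at this
  rw [integral_add i3 i4, integral_add (i1.const_mul 2) (i2.const_mul (2 * β ^ p)),
    integral_const_mul, integral_const_mul] at this
  linarith

lemma pmoment_iter {𝒢 : ℕ → MeasurableSpace Ω} (hle : ∀ i, 𝒢 i ≤ mΩ) (hmono : Monotone 𝒢)
    {β p v : ℝ} (hβ : 1 ≤ β) (hp1 : 1 < p) (hp2 : p ≤ 2)
    (hsmooth : ∀ x y : B, ‖x + y‖ ^ 2 + ‖x - y‖ ^ 2 ≤ 2 * ‖x‖ ^ 2 + 2 * β ^ 2 * ‖y‖ ^ 2)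
    {d : ℕ → Ω → B} (hd : ∀ i, StronglyMeasurable[𝒢 (i + 1)] (d i))
    (hdp : ∀ i, MemLp (d i) (ENNReal.ofReal p) P)
    (hd0 : ∀ i, P[d i | 𝒢 i] =ᵐ[P] 0) (hd2 : ∀ i, ∫ ω, ‖d i ω‖ ^ p ∂P ≤ v)
    (n : ℕ) :
    ∫ ω, ‖∑ i ∈ Finset.range n, d i ω‖ ^ p ∂P ≤ 2 * β ^ p * (n * v) := by
  induction n with
  | zero =>
    have : p ≠ 0 := by linarith
    simp [Real.zero_rpow this]
  | succ n ih =>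
    have hSm : StronglyMeasurable[𝒢 n] (fun ω => ∑ i ∈ Finset.range n, d i ω) := by
      apply Finset.stronglyMeasurable_fun_sum
      intro i hi
      exact (hd i).mono (hmono (Finset.mem_range.1 hi))
    simp only [Finset.sum_range_succ]
    have := pmoment_step (hle n) hβ hp1 hp2 hsmooth hSm
      (memLp_finsetSum _ fun i _ => hdp i) (hdp n) (hd0 n)
    refine this.trans ?_
    have b : 0 ≤ 2 * β ^ p := by positivity
    have := mul_le_mul_of_nonneg_left (hd2 n) b
    push_cast
    linarith
end
lemma Kp_bound {p t : ℝ} (hp : 1 < p) (ht : 0 ≤ t) : t - 1 ≤ Kp p * t ^ p := by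
  have hp0 : 0 < p := by linarith
  have hc : 0 < (p - 1) / p := div_pos (by linarith) hp0
  have h := one_add_mul_self_le_rpow_one_add (s := (p - 1) / p * t - 1)
    (by have := mul_nonneg hc.le ht; linarith) hp.le
  rw [show 1 + ((p - 1) / p * t - 1) = (p - 1) / p * t by ring, Real.mul_rpow hc.le ht] at h
  have e : ((p - 1) / p) ^ p = (p - 1) * Kp p := by
    unfold Kp
    have : ((p - 1) / p) ^ p = ((p - 1) / p) ^ (p - 1) * ((p - 1) / p) := by
      rw [← Real.rpow_add_one hc.ne']; congr 1; ring
    rw [this]; ring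
  rw [e] at h
  have e2 : 1 + p * ((p - 1) / p * t - 1) = (p - 1) * (t - 1) := by field_simp; ring
  rw [e2, mul_assoc] at h
  exact le_of_mul_le_mul_left h (by linarith)

lemma Kp_nonneg {p : ℝ} (hp : 1 < p) : 0 ≤ Kp p := by
  unfold Kp
  have : 0 ≤ (p - 1) / p := div_nonneg (by linarith) (by linarith)
  positivity

section
variable {B : Type*} [NormedAddCommGroup B] [NormedSpace ℝ B]

lemma truncB_eq (x : B) : truncB x = (max 1 ‖x‖)⁻¹ := by
  unfold truncB
  split_ifs with h
  · simp [h]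
  · have : 0 < ‖x‖ := norm_pos_iff.2 h
    rcases le_total 1 ‖x‖ with h1 | h1
    · rw [min_eq_left h1, max_eq_right h1, one_div]
    · rw [min_eq_right h1, max_eq_left h1, div_self this.ne', inv_one]

lemma truncB_norm_le_one (x : B) : ‖truncB x • x‖ ≤ 1 := by
  have : 0 < max 1 ‖x‖ := lt_of_lt_of_le one_pos (le_max_left _ _)
  rw [truncB_eq, norm_smul, norm_inv, Real.norm_eq_abs, abs_of_pos this, inv_mul_le_iff₀ this, mul_one]
  exact le_max_right _ _

lemma truncB_norm_le (x : B) : ‖truncB x • x‖ ≤ ‖x‖ := by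
  have : 0 < max 1 ‖x‖ := lt_of_lt_of_le one_pos (le_max_left _ _)
  rw [truncB_eq, norm_smul, norm_inv, Real.norm_eq_abs, abs_of_pos this]
  exact mul_le_of_le_one_left (norm_nonneg _) (inv_le_one_of_one_le₀ (le_max_left _ _))

lemma truncB_diff {p : ℝ} (hp : 1 < p) (x : B) : ‖truncB x • x - x‖ ≤ Kp p * ‖x‖ ^ p := by
  have h0 : 0 ≤ Kp p * ‖x‖ ^ p := mul_nonneg (Kp_nonneg hp) (by positivity)
  rw [truncB_eq]
  rcases le_total 1 ‖x‖ with h1 | h1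
  · have hx : 0 < ‖x‖ := by linarith
    rw [max_eq_right h1, show ‖x‖⁻¹ • x - x = (‖x‖⁻¹ - 1) • x by rw [sub_smul, one_smul], norm_smul,
      Real.norm_eq_abs, abs_of_nonpos (by have := inv_le_one_of_one_le₀ h1; linarith)]
    have : -(‖x‖⁻¹ - 1) * ‖x‖ = ‖x‖ - 1 := by field_simp; ring
    rw [this]
    exact Kp_bound hp hx.le
  · rw [max_eq_left h1]; simpa using h0

lemma continuous_truncB : Continuous (fun x : B => truncB x • x) := by
  have : (fun x : B => truncB x • x) = fun x => (max 1 ‖x‖)⁻¹ • x := by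
    funext x; rw [truncB_eq]
  rw [this]
  have h : ∀ x : B, max 1 ‖x‖ ≠ 0 := fun x => (lt_of_lt_of_le one_pos (le_max_left _ _)).ne'
  exact (Continuous.inv₀ (by fun_prop) h).smul continuous_id

variable [CompleteSpace B] {Ω : Type*} {m mΩ : MeasurableSpace Ω} {P : Measure Ω} [IsProbabilityMeasure P]

lemma condExp_affine_le (hm : m ≤ mΩ) {g f : Ω → ℝ} {v a b : ℝ} (hg : Integrable g P)
    (hgv : ∀ᵐ ω ∂P, (P[g | m]) ω ≤ v) (ha : 0 ≤ a) (hf : Integrable f P)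
    (hfg : ∀ᵐ ω ∂P, f ω ≤ a * g ω + b) : ∀ᵐ ω ∂P, (P[f | m]) ω ≤ a * v + b := by
  have h1 := condExp_mono (m := m) hf ((hg.smul a).add (integrable_const b)) hfg
  have h2 := condExp_add (hg.smul a) (integrable_const (μ := P) b) m
  have h3 := condExp_smul (μ := P) a g m
  rw [condExp_const hm] at h2
  filter_upwards [h1, h2, h3, hgv] with ω k1 k2 k3 k4
  rw [k2] at k1
  simp only [Pi.add_apply] at k1
  rw [k3] at k1
  simp only [Pi.smul_apply, smul_eq_mul] at k1
  have := mul_le_mul_of_nonneg_left k4 ha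
  linarith

lemma trunc_step (hm : m ≤ mΩ) {p v r lam : ℝ} (hp1 : 1 < p) (hp2 : p ≤ 2) (hr : 0 ≤ r) (hl : 0 < lam)
    {X Z : Ω → B} {μ : B} {A : Set Ω} (hX : Integrable X P)
    (hXp : Integrable (fun ω => ‖X ω - μ‖ ^ p) P) (hXm : P[X | m] =ᵐ[P] fun _ => μ)
    (hXv : ∀ᵐ ω ∂P, (P[fun ω' => ‖X ω' - μ‖ ^ p | m]) ω ≤ v)
    (hZ : StronglyMeasurable[m] Z) (hA : MeasurableSet[m] A) (hAr : ∀ ω ∈ A, ‖Z ω - μ‖ ≤ r)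
    {W d : Ω → B} (hW : W = fun ω => truncB (lam • A.indicator (fun ω => X ω - Z ω) ω) •
      (lam • A.indicator (fun ω => X ω - Z ω) ω)) (hd : d = fun ω => W ω - (P[W | m]) ω) :
    (∀ᵐ ω ∂P, ‖d ω‖ ≤ 2) ∧ P[d | m] =ᵐ[P] 0 ∧
    (∀ᵐ ω ∂P, (P[fun ω' => ‖d ω'‖ ^ 2 | m]) ω ≤ 2 ^ (p + 1) * lam ^ p * (v + r ^ p)) ∧
    (∀ᵐ ω ∂P, ω ∈ A → ‖(P[W | m]) ω - lam • (μ - Z ω)‖ ≤ Kp p * 2 ^ (p - 1) * lam ^ p * (v + r ^ p)) := by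
  have hp0 : 0 < p := by linarith
  set U : Ω → B := fun ω => lam • A.indicator (fun ω => X ω - Z ω) ω with hU
  have hWU : W = fun ω => truncB (U ω) • U ω := hW
  -- integrability of U
  have hUeq : U = fun ω => lam • A.indicator (fun ω => X ω - μ) ω - lam • A.indicator (fun ω => Z ω - μ) ω := by
    funext ω
    simp only [hU]
    by_cases h : ω ∈ A
    · simp only [Set.indicator_of_mem h]; rw [← smul_sub]; congr 1; abel
    · simp [Set.indicator_of_notMem h]
  have hZind : StronglyMeasurable[m] (A.indicator (fun ω => Z ω - μ)) :=
    (hZ.sub stronglyMeasurable_const).indicator hA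
  have hZi : Integrable (A.indicator (fun ω => Z ω - μ)) P := by
    refine Integrable.of_bound (hZind.mono hm).aestronglyMeasurable r (ae_of_all _ fun ω => ?_)
    by_cases h : ω ∈ A
    · simpa [Set.indicator_of_mem h] using hAr ω h
    · simpa [Set.indicator_of_notMem h] using hr
  have hXμ : Integrable (fun ω => X ω - μ) P := hX.sub (integrable_const μ)
  have hXi : Integrable (A.indicator (fun ω => X ω - μ)) P := hXμ.indicator (hm _ hA)
  have hUi : Integrable U P := by
    rw [hUeq]; exact (hXi.smul lam).sub (hZi.smul lam)
  have hWm : AEStronglyMeasurable W P := by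
    rw [hWU]; exact continuous_truncB.comp_aestronglyMeasurable hUi.1
  have hW1 : ∀ ω, ‖W ω‖ ≤ 1 := fun ω => by rw [hWU]; exact truncB_norm_le_one _
  have hWi : Integrable W P := Integrable.of_bound hWm 1 (ae_of_all _ hW1)
  have hUp : ∀ ω, ‖U ω‖ ^ p ≤ lam ^ p * 2 ^ (p - 1) * ‖X ω - μ‖ ^ p + lam ^ p * 2 ^ (p - 1) * r ^ p := by
    intro ω
    have hn : 0 ≤ lam ^ p * 2 ^ (p - 1) * ‖X ω - μ‖ ^ p + lam ^ p * 2 ^ (p - 1) * r ^ p := by positivity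
    by_cases h : ω ∈ A
    · simp only [hU, Set.indicator_of_mem h]
      rw [norm_smul, Real.norm_eq_abs, abs_of_pos hl, Real.mul_rpow hl.le (norm_nonneg _), mul_assoc,
        mul_assoc, ← mul_add, ← mul_add]
      apply mul_le_mul_of_nonneg_left _ (by positivity)
      refine le_trans ?_ (add_rpow_le_two hp1.le (norm_nonneg _) hr)
      apply Real.rpow_le_rpow (norm_nonneg _) _ hp0.le
      have : X ω - Z ω = (X ω - μ) - (Z ω - μ) := by abel
      rw [this]
      exact (norm_sub_le _ _).trans (add_le_add le_rfl (hAr ω h))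
    · simp only [hU, Set.indicator_of_notMem h]
      simpa [Real.zero_rpow hp0.ne'] using hn
  set q := lam ^ p * 2 ^ (p - 1) with hq
  have hq0 : 0 ≤ q := by positivity
  have hWp : ∀ ω, ‖W ω‖ ^ p ≤ q * ‖X ω - μ‖ ^ p + q * r ^ p := fun ω =>
    (Real.rpow_le_rpow (norm_nonneg _) (by rw [hWU]; exact truncB_norm_le _) hp0.le).trans (hUp ω)
  have hWpi : Integrable (fun ω => ‖W ω‖ ^ p) P := by
    refine Integrable.of_bound ((continuous_norm.rpow_const
      (fun x => Or.inr hp0.le)).comp_aestronglyMeasurable hWm) 1 (ae_of_all _ fun ω => ?_)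
    rw [Real.norm_eq_abs, abs_of_nonneg (by positivity)]
    exact Real.rpow_le_one (norm_nonneg _) (hW1 ω) hp0.le
  have hEW1 : ∀ᵐ ω ∂P, ‖(P[W | m]) ω‖ ≤ 1 := by
    have := Convex.condExp_mem (μ := P) hm hWi (Metric.isClosed_closedBall (x := (0:B)) (ε := 1)) (convex_closedBall _ _)
      (ae_of_all _ fun ω => by simpa using hW1 ω)
    filter_upwards [this] with ω h
    simpa using h
  have hEWp : ∀ᵐ ω ∂P, ‖(P[W | m]) ω‖ ^ p ≤ q * v + q * r ^ p := by
    have hJ := ConvexOn.map_condExp_le_univ (μ := P) hm (convexOn_norm_rpow' (B := B) hp1.le)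
      (continuous_norm.rpow_const (fun x => Or.inr hp0.le)).lowerSemicontinuous hWi hWpi
    have h2 := condExp_affine_le hm hXp hXv hq0 hWpi (ae_of_all _ hWp)
    filter_upwards [hJ, h2] with ω k1 k2
    exact le_trans k1 k2
  have hdb : ∀ᵐ ω ∂P, ‖d ω‖ ≤ 2 := by
    filter_upwards [hEW1] with ω h
    rw [hd]
    exact (norm_sub_le _ _).trans (by linarith [hW1 ω])
  have hdm : AEStronglyMeasurable d P := by
    rw [hd]; exact (hWi.sub integrable_condExp).1
  refine ⟨hdb, ?_, ?_, ?_⟩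
  · have h1 := condExp_sub hWi (integrable_condExp (m := m) (f := W) (μ := P)) m
    rw [condExp_of_stronglyMeasurable hm stronglyMeasurable_condExp integrable_condExp] at h1
    rw [hd]
    filter_upwards [h1] with ω h
    refine h.trans ?_
    simp
  · have hd2i : Integrable (fun ω => ‖d ω‖ ^ 2) P := by
      refine Integrable.of_bound (hdm.norm.pow 2) (2 ^ 2) ?_
      filter_upwards [hdb] with ω h2
      rw [Real.norm_eq_abs, abs_of_nonneg (by positivity)]
      exact pow_le_pow_left₀ (norm_nonneg _) h2 2
    have hpt : ∀ᵐ ω ∂P, ‖d ω‖ ^ 2 ≤ (2 * q) * ‖X ω - μ‖ ^ p + (2 * (q * r ^ p) + 2 * (q * v + q * r ^ p)) := by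
      filter_upwards [hdb, hEWp] with ω h1 h2
      have a1 : ‖d ω‖ ^ 2 ≤ 2 ^ (2 - p) * ‖d ω‖ ^ p := by
        rcases eq_or_lt_of_le (norm_nonneg (d ω)) with h0 | h0
        · rw [← h0]; simp [Real.zero_rpow hp0.ne']
        · have : ‖d ω‖ ^ 2 = ‖d ω‖ ^ (2 - p) * ‖d ω‖ ^ p := by
            rw [← Real.rpow_add h0, ← Real.rpow_natCast]; congr 1; push_cast; ring
          rw [this]
          exact mul_le_mul_of_nonneg_right (Real.rpow_le_rpow h0.le h1 (by linarith)) (by positivity)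
      have a2 : ‖d ω‖ ^ p ≤ 2 ^ (p - 1) * (‖W ω‖ ^ p + ‖(P[W | m]) ω‖ ^ p) := by
        refine le_trans ?_ (add_rpow_le_two hp1.le (norm_nonneg _) (norm_nonneg _))
        apply Real.rpow_le_rpow (norm_nonneg _) _ hp0.le
        rw [hd]; exact norm_sub_le _ _
      have a3 : (2:ℝ) ^ (2 - p) * 2 ^ (p - 1) = 2 := by
        rw [← Real.rpow_add two_pos]; norm_num
      have a4 : ‖d ω‖ ^ 2 ≤ 2 * (‖W ω‖ ^ p + ‖(P[W | m]) ω‖ ^ p) := by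
        refine a1.trans ((mul_le_mul_of_nonneg_left a2 (by positivity)).trans_eq ?_)
        rw [← mul_assoc, a3]
      have := hWp ω
      linarith
    have := condExp_affine_le hm hXp hXv (by positivity) hd2i hpt
    filter_upwards [this] with ω h
    refine h.trans_eq ?_
    have e : (2:ℝ) ^ (p + 1) = 4 * 2 ^ (p - 1) := by
      rw [show p + 1 = 2 + (p - 1) by ring, Real.rpow_add two_pos]; norm_num
    rw [e, hq]; ring
  · -- bias
    have hUc : ∀ᵐ ω ∂P, ω ∈ A → (P[U | m]) ω = lam • (μ - Z ω) := by
      have h1 := condExp_sub (hXi.smul lam) (hZi.smul lam) m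
      have h2 := condExp_smul (μ := P) lam (A.indicator (fun ω => X ω - μ)) m
      have h3 : P[lam • A.indicator (fun ω => Z ω - μ) | m] = lam • A.indicator (fun ω => Z ω - μ) :=
        condExp_of_stronglyMeasurable hm (hZind.const_smul lam) (hZi.smul lam)
      have h4 := condExp_indicator (m := m) hXμ hA
      have h5 := condExp_sub hX (integrable_const (μ := P) μ) m
      rw [condExp_const hm] at h5
      rw [h3] at h1
      have h6 : P[U | m] = P[lam • A.indicator (fun ω => X ω - μ) - lam • A.indicator (fun ω => Z ω - μ) | m] := by
        rw [hUeq]; rfl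
      rw [h6]
      filter_upwards [h1, h2, h4, h5, hXm] with ω k1 k2 k4 k5 k6 hω
      have k5' : (P[fun ω => X ω - μ | m]) ω = 0 := by
        refine Eq.trans k5 ?_
        simp [k6]
      rw [k1, Pi.sub_apply, k2]
      simp only [Pi.smul_apply]
      rw [k4, Set.indicator_of_mem hω, Set.indicator_of_mem hω, k5']
      rw [← smul_sub]; congr 1; abel
    have h1 := condExp_sub hWi hUi m
    have h2 := norm_condExp_le (μ := P) (m := m) (W - U)
    have h3 := condExp_affine_le (f := fun ω => ‖(W - U) ω‖) (a := Kp p * q) (b := Kp p * q * r ^ p) hm hXp hXv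
      (mul_nonneg (Kp_nonneg hp1) hq0) (hWi.sub hUi).norm (ae_of_all _ fun ω => by
        have t1 := truncB_diff hp1 (U ω)
        have t2 := mul_le_mul_of_nonneg_left (hUp ω) (Kp_nonneg hp1)
        simp only [Pi.sub_apply, hWU]
        linarith)
    filter_upwards [hUc, h1, h2, h3] with ω k0 k1 k2 k3 hω
    rw [← k0 hω, ← Pi.sub_apply, ← k1]
    refine k2.trans (k3.trans_eq ?_)
    rw [hq]; ring
end

lemma final_alg {p a w n lam x : ℝ} (hp : 1 < p) (ha : 0 < a) (hw : 0 < w) (hn : 0 < n)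
    (hlam : lam = (a / w) ^ (1 / p)) (hx : lam * n * x ≤ n * a + n * (w * lam ^ p)) :
    x ≤ 2 * w ^ (1 / p) * a ^ ((p - 1) / p) := by
  have hl : 0 < lam := by rw [hlam]; positivity
  have hlp : lam ^ p = a / w := by
    rw [hlam, ← Real.rpow_mul (by positivity), one_div_mul_cancel (by linarith), Real.rpow_one]
  have h1 : w * lam ^ p = a := by rw [hlp]; field_simp
  rw [h1] at hx
  have h2 : lam * (w ^ (1 / p) * a ^ ((p - 1) / p)) = a := by
    rw [hlam, Real.div_rpow ha.le hw.le]
    have : a ^ (1 / p) * a ^ ((p - 1) / p) = a := by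
      rw [← Real.rpow_add ha]
      have : 1 / p + (p - 1) / p = 1 := by field_simp; ring
      rw [this, Real.rpow_one]
    have hw' : 0 < w ^ (1 / p) := by positivity
    field_simp
    exact this
  have h3 : lam * x ≤ 2 * a := by nlinarith
  apply le_of_mul_le_mul_left _ hl
  linarith

lemma r2_pow {β v p δ k r : ℝ} (hβ : 1 ≤ β) (hv : 0 < v) (hp : 1 < p) (hδ : 0 < δ) (hk : 0 < k)
    (hr : r = 2 * β * v ^ (1 / p) * δ ^ (-(1 / p)) * k ^ (-((p - 1) / p))) :
    r ^ p = 2 ^ p * β ^ p * v / (δ * k ^ (p - 1)) := by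
  have hβ0 : 0 < β := by linarith
  have hp0 : p ≠ 0 := by linarith
  rw [hr, Real.mul_rpow (by positivity) (by positivity), Real.mul_rpow (by positivity) (by positivity),
    Real.mul_rpow (by positivity) (by positivity), Real.mul_rpow (by positivity) (by positivity),
    ← Real.rpow_mul hv.le, ← Real.rpow_mul hδ.le, ← Real.rpow_mul hk.le,
    show 1 / p * p = 1 by field_simp, show -(1 / p) * p = -1 by field_simp,
    show -((p - 1) / p) * p = -(p - 1) by field_simp, Real.rpow_one, Real.rpow_neg hδ.le, Real.rpow_neg hk.le,
    Real.rpow_one]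
  field_simp
lemma memLp_sub_of_mom {B : Type*} [NormedAddCommGroup B] {Ω : Type*} {mΩ : MeasurableSpace Ω}
    {P : Measure Ω} [IsProbabilityMeasure P] {p : ℝ} (hp1 : 1 < p) {X : Ω → B} (μ : B)
    (hX : AEStronglyMeasurable X P) (hm : Integrable (fun ω => ‖X ω‖ ^ p) P) :
    MemLp (fun ω => X ω - μ) (ENNReal.ofReal p) P := by
  have hp0 : 0 < p := by linarith
  have h : MemLp X (ENNReal.ofReal p) P := by
    rw [← integrable_norm_rpow_iff hX (by simpa using hp0) ENNReal.ofReal_ne_top,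
      ENNReal.toReal_ofReal hp0.le]
    exact hm
  exact h.sub (memLp_const μ)

lemma int_of_memLp {B : Type*} [NormedAddCommGroup B] {Ω : Type*} {mΩ : MeasurableSpace Ω}
    {P : Measure Ω} {p : ℝ} (hp1 : 1 < p) {X : Ω → B} 
    (h : MemLp X (ENNReal.ofReal p) P) : Integrable (fun ω => ‖X ω‖ ^ p) P := by
  have hp0 : 0 < p := by linarith
  have := h.integrable_norm_rpow (by simpa using hp0) ENNReal.ofReal_ne_top
  rwa [ENNReal.toReal_ofReal hp0.le] at this

lemma stageA
    {B : Type*} [NormedAddCommGroup B] [NormedSpace ℝ B] [CompleteSpace B]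
    {Ω : Type*} {mΩ : MeasurableSpace Ω} {P : Measure Ω} [IsProbabilityMeasure P]
    (β : ℝ) (hβ : 1 ≤ β)
    (hsmooth : ∀ x y : B, ‖x + y‖ ^ 2 + ‖x - y‖ ^ 2 ≤ 2 * ‖x‖ ^ 2 + 2 * β ^ 2 * ‖y‖ ^ 2)
    (ℱ : Filtration ℕ mΩ) (X : ℕ → Ω → B) (μ : B) (p v : ℝ)
    (hp1 : 1 < p) (hp2 : p ≤ 2) (hv : 0 < v)
    (hadapted : ∀ n : ℕ, 1 ≤ n → StronglyMeasurable[ℱ n] (X n))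
    (hint : ∀ n : ℕ, 1 ≤ n → Integrable (X n) P)
    (hmom : ∀ n : ℕ, 1 ≤ n → Integrable (fun ω => ‖X n ω‖ ^ p) P)
    (hcondmean : ∀ n : ℕ, P[X (n + 1) | ℱ n] =ᵐ[P] fun _ => μ)
    (hcondmom : ∀ n : ℕ, ∀ᵐ ω ∂P, (P[fun ω' => ‖X (n + 1) ω' - μ‖ ^ p | ℱ n]) ω ≤ v)
    (k : ℕ) (hk : 1 ≤ k) (δ₂ : ℝ) (hδ₂ : 0 < δ₂)
    (Z : Ω → B) (hZ : ∀ ω, Z ω = (k : ℝ)⁻¹ • ∑ m ∈ Finset.range k, X (m + 1) ω)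
    (r₂ : ℝ) (hr0 : 0 ≤ r₂)
    (hr₂ : r₂ ^ p = 2 ^ p * β ^ p * v / (δ₂ * (k : ℝ) ^ (p - 1))) :
    P.real {ω | ‖Z ω - μ‖ ≤ r₂}ᶜ ≤ δ₂ := by
  have hk0 : (0 : ℝ) < k := by exact_mod_cast hk
  have hβ0 : 0 < β := by linarith
  have hp0 : 0 < p := by linarith
  have hL : ∀ i, MemLp (fun ω => X (i + 1) ω - μ) (ENNReal.ofReal p) P := fun i =>
    memLp_sub_of_mom hp1 μ (hint _ (by omega)).aestronglyMeasurable (hmom _ (by omega))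
  have key := pmoment_iter (P := P) (𝒢 := fun i => ℱ i) (fun i => ℱ.le i) (fun _ _ h => ℱ.mono h) hβ hp1 hp2 hsmooth
    (d := fun i ω => X (i + 1) ω - μ) (v := v)
    (fun i => (hadapted (i + 1) (by omega)).sub stronglyMeasurable_const) hL
    (fun i => by
      have h1 : P[fun ω => X (i + 1) ω - μ | ℱ i] =ᵐ[P] P[X (i + 1) | ℱ i] - P[fun _ => μ | ℱ i] :=
        condExp_sub (hint _ (by omega)) (integrable_const μ) _
      rw [condExp_const (ℱ.le i)] at h1
      filter_upwards [h1, hcondmean i] with ω h2 h3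
      rw [h2, Pi.sub_apply, h3]; simp)
    (fun i => by
      rw [← integral_condExp (ℱ.le i)]
      calc _ ≤ ∫ _, v ∂P := integral_mono_ae integrable_condExp (integrable_const v) (hcondmom i)
        _ = v := by simp) k
  have hS : MemLp (fun ω => ∑ i ∈ Finset.range k, (X (i + 1) ω - μ)) (ENNReal.ofReal p) P :=
    memLp_finsetSum _ (fun i _ => hL i)
  have hSi := int_of_memLp hp1 hS
  have hmk := mul_meas_ge_le_integral_of_nonneg (ae_of_all _ fun ω => by positivity) hSi
    (k * (2 ^ p * β ^ p * v / δ₂))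
  have hsub : {ω | ‖Z ω - μ‖ ≤ r₂}ᶜ ⊆ {ω | k * (2 ^ p * β ^ p * v / δ₂) ≤
      ‖∑ i ∈ Finset.range k, (X (i + 1) ω - μ)‖ ^ p} := by
    intro ω hω
    simp only [Set.mem_compl_iff, Set.mem_ofPred_eq, not_le] at hω ⊢
    have e : ∑ i ∈ Finset.range k, (X (i + 1) ω - μ) = (k : ℝ) • (Z ω - μ) := by
      rw [hZ, smul_sub, smul_inv_smul₀ hk0.ne', Finset.sum_sub_distrib]
      simp [← Nat.cast_smul_eq_nsmul ℝ]
    rw [e, norm_smul, Real.norm_of_nonneg hk0.le, Real.mul_rpow hk0.le (norm_nonneg _)]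
    have h1 : r₂ ^ p ≤ ‖Z ω - μ‖ ^ p := Real.rpow_le_rpow hr0 hω.le hp0.le
    calc _ = (k : ℝ) ^ p * r₂ ^ p := by
          rw [hr₂, Real.rpow_sub_one hk0.ne']; field_simp
      _ ≤ _ := by gcongr
  have h2 : (2 : ℝ) ≤ 2 ^ p := by
    calc (2 : ℝ) = 2 ^ (1 : ℝ) := by simp
      _ ≤ 2 ^ p := Real.rpow_le_rpow_of_exponent_le (by norm_num) hp1.le
  refine (measureReal_mono hsub).trans ?_
  set q := P.real {ω | k * (2 ^ p * β ^ p * v / δ₂) ≤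
      ‖∑ i ∈ Finset.range k, (X (i + 1) ω - μ)‖ ^ p}
  have h3 : k * (2 ^ p * β ^ p * v / δ₂) * q ≤ 2 * β ^ p * (k * v) := hmk.trans key
  have hb : 0 < β ^ p := by positivity
  have h4 : (k * β ^ p * v) * (2 ^ p * q) ≤ (k * β ^ p * v) * (2 * δ₂) := by
    have : k * (2 ^ p * β ^ p * v / δ₂) * q = (k * β ^ p * v) * (2 ^ p * q) / δ₂ := by ring
    rw [this, div_le_iff₀ hδ₂] at h3
    linarith
  have h5 := le_of_mul_le_mul_left h4 (by positivity)
  have hq : 0 ≤ q := measureReal_nonneg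
  nlinarith

lemma frakC_pos {p ρ : ℝ} (hρ : 0 < ρ) : 0 < frakC p ρ := by
  unfold frakC
  have := Real.add_one_lt_exp (show 2 * ρ ≠ 0 by positivity)
  have h : 0 < Real.exp (2 * ρ) - 2 * ρ - 1 := by linarith
  positivity

lemma stageB
    {B : Type*} [NormedAddCommGroup B] [NormedSpace ℝ B] [CompleteSpace B]
    {Ω : Type*} {mΩ : MeasurableSpace Ω} {P : Measure Ω} [IsProbabilityMeasure P]
    {𝒢 : ℕ → MeasurableSpace Ω} (hle : ∀ i, 𝒢 i ≤ mΩ) (hmono : Monotone 𝒢)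
    {β p T : ℝ} (hβ : 1 ≤ β) (hT : 0 ≤ T)
    (hsmooth : ∀ x y : B, ‖x + y‖ ^ 2 + ‖x - y‖ ^ 2 ≤ 2 * ‖x‖ ^ 2 + 2 * β ^ 2 * ‖y‖ ^ 2)
    {d : ℕ → Ω → B} (hd : ∀ i, StronglyMeasurable[𝒢 (i + 1)] (d i))
    (hdb : ∀ i, ∀ᵐ ω ∂P, ‖d i ω‖ ≤ 2) (hd0 : ∀ i, P[d i | 𝒢 i] =ᵐ[P] 0)
    (hd2 : ∀ i, ∀ᵐ ω ∂P, (P[fun ω' => ‖d i ω'‖ ^ 2 | 𝒢 i]) ω ≤ 2 ^ (p + 1) * T) (n : ℕ)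
    {δ : ℝ} (hδ : 0 < δ) :
    P.real {ω | ‖∑ i ∈ Finset.range n, d i ω‖ ≤
      β * (Real.log (2 / δ) + n * (frakC p (1 / β) * T))}ᶜ ≤ δ := by
  have hβ0 : 0 < β := by linarith
  have hC := frakC_pos (p := p) (ρ := 1 / β) (by positivity)
  set C := frakC p (1 / β) with hCdef
  have key := pinelis_iter (P := P) hle hmono (β := β) (M := 2 * (1 / β)) (s := β⁻¹ ^ 2 * (2 ^ (p + 1) * T))
    hβ (by positivity) (by positivity) hsmooth (d := fun i ω => β⁻¹ • d i ω)
    (fun i => (hd i).const_smul β⁻¹)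
    (fun i => by
      filter_upwards [hdb i] with ω h
      rw [norm_smul, Real.norm_of_nonneg (by positivity), one_div, mul_comm]
      gcongr)
    (fun i => by
      have h1 : P[β⁻¹ • d i | 𝒢 i] =ᵐ[P] β⁻¹ • P[d i | 𝒢 i] := condExp_smul β⁻¹ (d i) (𝒢 i)
      have h2 : (fun ω => β⁻¹ • d i ω) = β⁻¹ • d i := rfl
      rw [h2]
      filter_upwards [h1, hd0 i] with ω h3 h4
      rw [h3, Pi.smul_apply, h4]; simp)
    (fun i => by
      have h2 : (fun ω => ‖β⁻¹ • d i ω‖ ^ 2) = (β⁻¹ ^ 2) • (fun ω => ‖d i ω‖ ^ 2) := by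
        funext ω
        rw [norm_smul, Real.norm_of_nonneg (by positivity), mul_pow]; rfl
      have h1 : P[(β⁻¹ ^ 2) • (fun ω => ‖d i ω‖ ^ 2) | 𝒢 i] =ᵐ[P]
        (β⁻¹ ^ 2) • P[(fun ω => ‖d i ω‖ ^ 2) | 𝒢 i] := condExp_smul (β⁻¹ ^ 2) _ (𝒢 i)
      rw [h2]
      filter_upwards [h1, hd2 i] with ω h3 h4
      rw [h3, Pi.smul_apply, smul_eq_mul]
      gcongr) n
  have hc : β ^ 2 * ((Real.exp (2 * (1 / β)) - 1 - 2 * (1 / β)) / (2 * (1 / β)) ^ 2) *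
      (β⁻¹ ^ 2 * (2 ^ (p + 1) * T)) = C * T := by
    rw [hCdef, frakC]; field_simp; ring
  rw [hc] at key
  have key2 : (1 + C * T) ^ n ≤ Real.exp (n * (C * T)) := by
    rw [Real.exp_nat_mul]
    have := Real.add_one_le_exp (C * T)
    gcongr
    linarith
  have hSm : StronglyMeasurable (fun ω => ∑ i ∈ Finset.range n, β⁻¹ • d i ω) :=
    Finset.stronglyMeasurable_fun_sum _ fun i _ => (((hd i).mono (hle _)).const_smul β⁻¹)
  have hfi : Integrable (fun ω => Real.cosh ‖∑ i ∈ Finset.range n, β⁻¹ • d i ω‖) P := by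
    refine Integrable.of_bound
      (Real.continuous_cosh.comp_stronglyMeasurable hSm.norm).aestronglyMeasurable
      (Real.cosh (n * 2)) ?_
    filter_upwards [ae_all_iff.2 hdb] with ω h
    rw [Real.norm_of_nonneg (Real.cosh_pos _).le, Real.cosh_le_cosh, abs_norm,
      abs_of_nonneg (by positivity)]
    refine (norm_sum_le _ _).trans ?_
    calc _ ≤ ∑ i ∈ Finset.range n, (2 : ℝ) := by
          refine Finset.sum_le_sum fun i _ => ?_
          rw [norm_smul, Real.norm_of_nonneg (by positivity)]
          have : β⁻¹ ≤ 1 := inv_le_one_of_one_le₀ hβ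
          nlinarith [h i, norm_nonneg (d i ω)]
      _ = n * 2 := by simp
  have hmk := mul_meas_ge_le_integral_of_nonneg (ae_of_all _ fun ω => (Real.cosh_pos _).le) hfi
    (Real.exp (n * (C * T)) / δ)
  have hsub : {ω | ‖∑ i ∈ Finset.range n, d i ω‖ ≤ β * (Real.log (2 / δ) + n * (C * T))}ᶜ ⊆
      {ω | Real.exp (n * (C * T)) / δ ≤ Real.cosh ‖∑ i ∈ Finset.range n, β⁻¹ • d i ω‖} := by
    intro ω hω
    simp only [Set.mem_compl_iff, Set.mem_ofPred_eq, not_le] at hω ⊢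
    have h1 : Real.log (2 / δ) + n * (C * T) ≤ ‖∑ i ∈ Finset.range n, β⁻¹ • d i ω‖ := by
      rw [← Finset.smul_sum, norm_smul, Real.norm_of_nonneg (by positivity), inv_mul_eq_div,
        le_div_iff₀ hβ0]
      linarith
    have h2 := Real.exp_le_exp.2 h1
    rw [Real.exp_add, Real.exp_log (by positivity)] at h2
    rw [Real.cosh_eq]
    have h3 := Real.exp_pos (-‖∑ i ∈ Finset.range n, β⁻¹ • d i ω‖)
    have h4 : Real.exp (n * (C * T)) / δ = (2 / δ * Real.exp (n * (C * T))) / 2 := by ring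
    rw [h4]; linarith
  refine (measureReal_mono hsub).trans ?_
  have h5 := hmk.trans (key.trans key2)
  rw [div_mul_eq_mul_div, div_le_iff₀ hδ] at h5
  exact le_of_mul_le_mul_left h5 (Real.exp_pos _)

lemma finish {Ω : Type*} {mΩ : MeasurableSpace Ω} {P : Measure Ω} [IsProbabilityMeasure P]
    {A E G : Set Ω} {δ₁ δ₂ : ℝ} (hA : P.real Aᶜ ≤ δ₂) (hE : P.real Eᶜ ≤ δ₁)
    (h : ∀ᵐ ω ∂P, ω ∈ A → ω ∈ E → ω ∈ G) : ENNReal.ofReal (1 - δ₁ - δ₂) ≤ P G := by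
  have h1 : P.real Set.univ ≤ P.real (G ∪ (Aᶜ ∪ Eᶜ)) := by
    refine ENNReal.toReal_mono (measure_ne_top _ _) (measure_mono_ae ?_)
    filter_upwards [h] with ω hω _
    by_cases ha : ω ∈ A
    · by_cases he : ω ∈ E
      · exact Or.inl (hω ha he)
      · exact Or.inr (Or.inr he)
    · exact Or.inr (Or.inl ha)
  have h2 : P.real (G ∪ (Aᶜ ∪ Eᶜ)) ≤ P.real G + (P.real Aᶜ + P.real Eᶜ) :=
    (measureReal_union_le _ _).trans (by gcongr; exact measureReal_union_le _ _)
  have h3 : P.real Set.univ = 1 := by simp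
  refine ENNReal.ofReal_le_of_le_toReal ?_
  change 1 - δ₁ - δ₂ ≤ P.real G
  linarith
/-- **Truncated estimator centered at the sample mean of the first `k` observations.**
Under the natural filtration, with `Ẑ` the sample mean of `X₁, …, X_k`,
`r₂ = 2βv^{1/p}δ₂^{-1/p}k^{-(p-1)/p}` and the optimized `λ`, with probability at least
`1 - δ₁ - δ₂`,
`‖μ̂_N(k) - μ‖ ≤ 2((β𝔠_p + K_p2^{p-1})(v + 2^pβ^pv/(δ₂k^{p-1})))^{1/p}(β log(2/δ₁)/(N-k))^{(p-1)/p}`. -/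
theorem stmt14
    {B : Type*} [NormedAddCommGroup B] [NormedSpace ℝ B] [CompleteSpace B]
    [TopologicalSpace.SeparableSpace B] [MeasurableSpace B] [BorelSpace B]
    {Ω : Type*} {mΩ : MeasurableSpace Ω} {P : Measure Ω} [IsProbabilityMeasure P]
    (β : ℝ) (hβ : 1 ≤ β)
    (hsmooth : ∀ x y : B, ‖x + y‖ ^ 2 + ‖x - y‖ ^ 2 ≤ 2 * ‖x‖ ^ 2 + 2 * β ^ 2 * ‖y‖ ^ 2)
    (ℱ : Filtration ℕ mΩ) (X : ℕ → Ω → B) (μ : B) (p v : ℝ)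
    (hp1 : 1 < p) (hp2 : p ≤ 2) (hv : 0 < v)
    (hadapted : ∀ n : ℕ, 1 ≤ n → StronglyMeasurable[ℱ n] (X n))
    (hint : ∀ n : ℕ, 1 ≤ n → Integrable (X n) P)
    (hmom : ∀ n : ℕ, 1 ≤ n → Integrable (fun ω => ‖X n ω‖ ^ p) P)
    (hcondmean : ∀ n : ℕ, P[X (n + 1) | ℱ n] =ᵐ[P] fun _ => μ)
    (hcondmom : ∀ n : ℕ, ∀ᵐ ω ∂P, (P[fun ω' => ‖X (n + 1) ω' - μ‖ ^ p | ℱ n]) ω ≤ v)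
    (hnat : ∀ n : ℕ, ℱ n = ⨆ m ∈ Set.Icc 1 n, MeasurableSpace.comap (X m) ‹MeasurableSpace B›)
    (k N : ℕ) (hk : 1 ≤ k) (hkN : k < N)
    (δ₁ δ₂ : ℝ) (hδ₁ : δ₁ ∈ Set.Ioo (0 : ℝ) 1) (hδ₂ : δ₂ ∈ Set.Ioo (0 : ℝ) 1)
    (hδ : δ₁ + δ₂ ≤ 1)
    (Z : Ω → B) (hZ : ∀ ω, Z ω = (k : ℝ)⁻¹ • ∑ m ∈ Finset.range k, X (m + 1) ω)
    (r₂ : ℝ) (hr₂ : r₂ = 2 * β * v ^ (1 / p) * δ₂ ^ (-(1 / p)) * (k : ℝ) ^ (-((p - 1) / p)))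
    (lam : ℝ)
    (hlam : lam = (β * Real.log (2 / δ₁) /
      (((N : ℝ) - k) * (β * frakC p (1 / β) + Kp p * 2 ^ (p - 1)) * (v + r₂ ^ p))) ^ (1 / p)) :
    ENNReal.ofReal (1 - δ₁ - δ₂) ≤
      P {ω |
        ‖((N : ℝ) - k)⁻¹ • (∑ m ∈ Finset.Ioc k N,
            (truncB (lam • (X m ω - Z ω)) • (X m ω - Z ω) + Z ω)) - μ‖ ≤
          2 * ((β * frakC p (1 / β) + Kp p * 2 ^ (p - 1)) *
              (v + 2 ^ p * β ^ p * v / (δ₂ * (k : ℝ) ^ (p - 1)))) ^ (1 / p) *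
            (β * Real.log (2 / δ₁) / ((N : ℝ) - k)) ^ ((p - 1) / p)} := by
  obtain ⟨hδ₁0, hδ₁1⟩ := hδ₁
  obtain ⟨hδ₂0, hδ₂1⟩ := hδ₂
  obtain ⟨n, rfl⟩ : ∃ n, N = k + n := ⟨N - k, by omega⟩
  have hn0 : (0 : ℝ) < n := by exact_mod_cast (by omega : 0 < n)
  have hNk : ((k + n : ℕ) : ℝ) - k = n := by push_cast; ring
  rw [hNk] at hlam ⊢
  have hβ0 : 0 < β := by linarith
  have hk0 : (0 : ℝ) < k := by exact_mod_cast hk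
  have hr0 : 0 ≤ r₂ := by rw [hr₂]; positivity
  have hrp := r2_pow hβ hv hp1 hδ₂0 hk0 hr₂
  have hC := frakC_pos (p := p) (ρ := 1 / β) (by positivity)
  set C := frakC p (1 / β) with hCdef
  have hK := Kp_nonneg hp1
  have hL : 0 < Real.log (2 / δ₁) := Real.log_pos (by rw [lt_div_iff₀ hδ₁0]; linarith)
  set L := Real.log (2 / δ₁) with hLdef
  have hV : 0 < v + r₂ ^ p := by positivity
  rw [← hrp]
  set V := v + r₂ ^ p with hVdef
  set D := β * C + Kp p * 2 ^ (p - 1) with hDdef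
  have hD : 0 < D := by positivity
  have hlam' : lam = ((β * L / n) / (D * V)) ^ (1 / p) := by
    rw [hlam]; congr 1; field_simp
  have hl : 0 < lam := by rw [hlam']; positivity
  -- measurability of the pilot estimator
  have hZm : StronglyMeasurable[ℱ k] Z := by
    have : Z = fun ω => (k : ℝ)⁻¹ • ∑ m ∈ Finset.range k, X (m + 1) ω := funext hZ
    rw [this]
    refine StronglyMeasurable.const_smul (Finset.stronglyMeasurable_fun_sum _ fun i hi => ?_) _
    exact (hadapted (i + 1) (by omega)).mono (ℱ.mono (by have := Finset.mem_range.1 hi; omega))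
  set A : Set Ω := {ω | ‖Z ω - μ‖ ≤ r₂} with hAdef
  have hAm : MeasurableSet[ℱ k] A :=
    (StronglyMeasurable.norm (hZm.sub stronglyMeasurable_const)).measurableSet_le
      stronglyMeasurable_const
  have hAP : P.real Aᶜ ≤ δ₂ := stageA β hβ hsmooth ℱ X μ p v hp1 hp2 hv hadapted hint hmom
    hcondmean hcondmom k hk δ₂ hδ₂0 Z hZ r₂ hr0 hrp
  -- the truncated increments
  set W : ℕ → Ω → B := fun i ω =>
    truncB (lam • A.indicator (fun ω => X (k + i + 1) ω - Z ω) ω) •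
      (lam • A.indicator (fun ω => X (k + i + 1) ω - Z ω) ω) with hWdef
  set d : ℕ → Ω → B := fun i ω => W i ω - (P[W i | ℱ (k + i)]) ω with hddef
  have hstep := fun i : ℕ => trunc_step (P := P) (ℱ.le (k + i)) hp1 hp2 hr0 hl
    (hint (k + i + 1) (by omega))
    (int_of_memLp hp1 (memLp_sub_of_mom hp1 μ (hint (k + i + 1) (by omega)).aestronglyMeasurable
      (hmom _ (by omega)))) (hcondmean (k + i)) (hcondmom (k + i))
    (hZm.mono (ℱ.mono (by omega))) (ℱ.mono (by omega : k ≤ k + i) _ hAm) (fun ω hω => hω)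
    (W := W i) (d := d i) rfl rfl
  have hdm : ∀ i, StronglyMeasurable[ℱ (k + (i + 1))] (d i) := by
    intro i
    have hXZ : StronglyMeasurable[ℱ (k + (i + 1))] (fun ω => X (k + i + 1) ω - Z ω) :=
      (hadapted (k + i + 1) (by omega)).sub (hZm.mono (ℱ.mono (by omega)))
    have hU : StronglyMeasurable[ℱ (k + (i + 1))]
        (fun ω => lam • A.indicator (fun ω => X (k + i + 1) ω - Z ω) ω) :=
      (hXZ.indicator (ℱ.mono (by omega : k ≤ k + (i + 1)) _ hAm)).const_smul lam
    have hWm : StronglyMeasurable[ℱ (k + (i + 1))] (W i) :=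
      continuous_truncB.comp_stronglyMeasurable hU
    exact hWm.sub (stronglyMeasurable_condExp.mono (ℱ.mono (by omega)))
  have hE := stageB (P := P) (𝒢 := fun i => ℱ (k + i)) (fun i => ℱ.le _)
    (fun i j hij => ℱ.mono (by omega)) (p := p) (T := lam ^ p * V) hβ (by positivity) hsmooth
    (d := d) hdm (fun i => (hstep i).1) (fun i => (hstep i).2.1)
    (fun i => by
      filter_upwards [(hstep i).2.2.1] with ω h
      rw [← mul_assoc]; exact h) n hδ₁0
  refine finish hAP hE ?_
  filter_upwards [ae_all_iff.2 fun i => (hstep i).2.2.2] with ω hω hA hEω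
  change ‖∑ i ∈ Finset.range n, d i ω‖ ≤ β * (Real.log (2 / δ₁) + n * (frakC p (1 / β) * (lam ^ p * V))) at hEω
  rw [← hCdef, ← hLdef] at hEω
  have hsum : ∑ m ∈ Finset.Ioc k (k + n),
      (truncB (lam • (X m ω - Z ω)) • (X m ω - Z ω) + Z ω) =
      ∑ i ∈ Finset.range n, (truncB (lam • (X (k + i + 1) ω - Z ω)) • (X (k + i + 1) ω - Z ω) + Z ω) := by
    have : Finset.Ioc k (k + n) = Finset.Ico (k + 1) (k + n + 1) := by ext; simp
    rw [this, Finset.sum_Ico_eq_sum_range, show k + n + 1 - (k + 1) = n by omega]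
    refine Finset.sum_congr rfl fun i _ => ?_
    rw [show k + 1 + i = k + i + 1 by omega]
  rw [hsum]
  set x := (n : ℝ)⁻¹ • (∑ i ∈ Finset.range n,
    (truncB (lam • (X (k + i + 1) ω - Z ω)) • (X (k + i + 1) ω - Z ω) + Z ω)) - μ with hx
  have hdec : (lam * n) • x = ∑ i ∈ Finset.range n, d i ω +
      ∑ i ∈ Finset.range n, ((P[W i | ℱ (k + i)]) ω - lam • (μ - Z ω)) := by
    have h1 : (n : ℝ) • x = ∑ i ∈ Finset.range n,
        (truncB (lam • (X (k + i + 1) ω - Z ω)) • (X (k + i + 1) ω - Z ω) + Z ω - μ) := by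
      rw [hx, smul_sub, smul_inv_smul₀ hn0.ne', Finset.sum_sub_distrib]
      simp [← Nat.cast_smul_eq_nsmul ℝ]
    rw [mul_smul, h1, Finset.smul_sum, ← Finset.sum_add_distrib]
    refine Finset.sum_congr rfl fun i _ => ?_
    simp only [hddef, hWdef, Set.indicator_of_mem hA]
    rw [smul_comm (truncB (lam • (X (k + i + 1) ω - Z ω))) lam]
    simp only [smul_sub, smul_add]
    abel
  have hb : ‖∑ i ∈ Finset.range n, ((P[W i | ℱ (k + i)]) ω - lam • (μ - Z ω))‖ ≤
      n * (Kp p * 2 ^ (p - 1) * lam ^ p * V) := by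
    refine (norm_sum_le _ _).trans ((Finset.sum_le_sum fun i _ => hω i hA).trans ?_)
    simp [hVdef]
  have hnorm : lam * n * ‖x‖ = ‖(lam * n) • x‖ := by
    rw [norm_smul, Real.norm_of_nonneg (by positivity)]
  refine final_alg hp1 (by positivity) (by positivity) hn0 hlam' ?_
  rw [hnorm, hdec]
  refine (norm_add_le _ _).trans ((add_le_add hEω hb).trans (le_of_eq ?_))
  rw [hDdef]; field_simp
  try ring
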